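/- Let δ ∈ D_0 with Σ_δ = {0,1}. Define c_δ(x) = b(max(x)) · ∏_{i : x_i ≠ max(x)} a(x_i) for x ∈ [0,1]^d, with a, b as in the construction. Then c_δ is the density of a d-dimensional copula: c_δ ≥ 0, and for each coordinate i and each r ∈ [0,1], ∫_{[0,1]^d} c_δ(u) 1{u_i ≤ r} du = r. -/

import Mathlib

open MeasureTheory Set
open scoped Classical
open Filter Topology
open scoped ENNReal NNReal

/-!
Almost surely a single coordinate is maximal, so the cube splits according to which one it is, and
each piece is an iterated integral expressed through `A(s) = ∫_0^s a = h(s)^(1/d) e^(F(s))`.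

If the maximum is at most `r`, so is every coordinate, and each of the `d` pieces contributes
`∫_0^r b A^(d-1) = δ(r)/d`. If the maximum exceeds `r` while `u_i ≤ r`, it is attained at one of the
`d - 1` other coordinates, and each of these pieces contributes `A(r) ∫_r^1 b A^(d-2)`; as
`b A^(d-2)` is the derivative of `-h^(1-1/d) e^(-F) / (d-1)`, this equals `h(r)/(d-1)`. The total is
`δ(r) + h(r) = r`.
-/

/-! ### The fundamental theorem of calculus for locally Lipschitz functions -/

section FundamentalTheorem

variable {G g : ℝ → ℝ} {p q l m : ℝ}

lemma lintegral_Ioc_ofReal_eq_sub_of_absolutelyContinuousOnInterval (hpq : p ≤ q)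
    (hG : AbsolutelyContinuousOnInterval G p q)
    (hderiv : ∀ᵐ t ∂volume.restrict (Ioc p q), HasDerivAt G (g t) t)
    (hnonneg : ∀ᵐ t ∂volume.restrict (Ioc p q), 0 ≤ g t) :
    ∫⁻ t in Ioc p q, ENNReal.ofReal (g t) = ENNReal.ofReal (G q - G p) := by
  have hg : deriv G =ᵐ[volume.restrict (Ioc p q)] g := hderiv.mono fun t ht => ht.deriv
  have hint : Integrable g (volume.restrict (Ioc p q)) := hG.intervalIntegrable_deriv.1.congr hg
  rw [← ofReal_integral_eq_lintegral_ofReal hint hnonneg, ← integral_congr_ae hg,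
    ← intervalIntegral.integral_of_le hpq, hG.integral_deriv_eq_sub]

lemma absolutelyContinuousOnInterval_of_locallyLipschitzOn_Icc (hpq : p ≤ q)
    (hG : LocallyLipschitzOn (Icc p q) G) : AbsolutelyContinuousOnInterval G p q := by
  obtain ⟨K, hK⟩ := hG.exists_lipschitzOnWith_of_compact isCompact_Icc
  exact LipschitzOnWith.absolutelyContinuousOnInterval (K := K) (by rwa [uIcc_of_le hpq])

/- Exhaust `(p, q)` by compact intervals; nonnegativity of `g` gives monotone convergence. -/
lemma lintegral_Ioo_ofReal_eq_sub_of_locallyLipschitzOn (hpq : p < q)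
    (hG : LocallyLipschitzOn (Ioo p q) G)
    (hderiv : ∀ᵐ t ∂volume.restrict (Ioo p q), HasDerivAt G (g t) t)
    (hnonneg : ∀ᵐ t ∂volume.restrict (Ioo p q), 0 ≤ g t)
    (hl : Tendsto G (𝓝[>] p) (𝓝 l)) (hm : Tendsto G (𝓝[<] q) (𝓝 m)) :
    ∫⁻ t in Ioo p q, ENNReal.ofReal (g t) = ENNReal.ofReal (m - l) := by
  have hmeas : AEMeasurable (fun t => ENNReal.ofReal (g t)) (volume.restrict (Ioo p q)) :=
    AEMeasurable.ennreal_ofReal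
      ⟨deriv G, measurable_deriv G, hderiv.mono fun t ht => ht.deriv.symm⟩
  obtain ⟨x, hpx, hxq⟩ := exists_between hpq
  obtain ⟨u, -, hu, hu_lim⟩ := exists_seq_strictAnti_tendsto' hpx
  obtain ⟨v, -, hv, hv_lim⟩ := exists_seq_strictMono_tendsto' hxq
  have hcompact : ∀ n, ∫⁻ t in Ioc (u n) (v n), ENNReal.ofReal (g t) ∂volume.restrict (Ioo p q) =
      ENNReal.ofReal (G (v n) - G (u n)) := fun n => by
    have huv : u n ≤ v n := ((hu n).2.trans (hv n).1).le
    have hsub : Ioc (u n) (v n) ⊆ Ioo p q := fun t ht =>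
      ⟨(hu n).1.trans ht.1, ht.2.trans_lt (hv n).2⟩
    rw [Measure.restrict_restrict_of_subset hsub]
    exact lintegral_Ioc_ofReal_eq_sub_of_absolutelyContinuousOnInterval huv
      (absolutelyContinuousOnInterval_of_locallyLipschitzOn_Icc huv
        (hG.mono (Icc_subset_Ioo (hu n).1 (hv n).2)))
      (ae_restrict_of_ae_restrict_of_subset hsub hderiv)
      (ae_restrict_of_ae_restrict_of_subset hsub hnonneg)
  have hexhaust := (aecover_Ioo_of_Ioc (μ := volume) hu_lim hv_lim
    ).lintegral_tendsto_of_countably_generated hmeas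
  simp_rw [hcompact] at hexhaust
  have hu_right : Tendsto u atTop (𝓝[>] p) :=
    tendsto_nhdsWithin_iff.2 ⟨hu_lim, .of_forall fun n => (hu n).1⟩
  have hv_left : Tendsto v atTop (𝓝[<] q) :=
    tendsto_nhdsWithin_iff.2 ⟨hv_lim, .of_forall fun n => (hv n).2⟩
  exact tendsto_nhds_unique hexhaust
    (ENNReal.tendsto_ofReal ((hm.comp hv_left).sub (hl.comp hu_right)))

end FundamentalTheorem

lemma locallyLipschitzOn_of_lipschitzOnWith {α β : Type*} [PseudoEMetricSpace α]
    [PseudoEMetricSpace β] {K : ℝ≥0} {s : Set α} {f : α → β} (hf : LipschitzOnWith K f s) :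
    LocallyLipschitzOn s f :=
  fun _ _ => ⟨K, s, self_mem_nhdsWithin, hf⟩

lemma locallyLipschitzOn_contDiffAt_comp {α E F : Type*} [PseudoEMetricSpace α]
    [NormedAddCommGroup E] [NormedSpace ℝ E] [NormedAddCommGroup F] [NormedSpace ℝ F]
    {s : Set α} {f : α → E} {φ : E → F} (hf : LocallyLipschitzOn s f)
    (hφ : ∀ x ∈ s, ContDiffAt ℝ 1 φ (f x)) : LocallyLipschitzOn s (φ ∘ f) := by
  intro x hx
  obtain ⟨K, t, ht, hfK⟩ := hf hx
  obtain ⟨L, t', ht', hφL⟩ := (hφ x hx).exists_lipschitzOnWith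
  exact ⟨L * K, t ∩ f ⁻¹' t', inter_mem ht (hf.continuousOn x hx ht'),
    hφL.comp (hfK.mono inter_subset_left) fun y hy => hy.2⟩

lemma locallyLipschitzOn_prodMk {α β γ : Type*} [PseudoEMetricSpace α] [PseudoEMetricSpace β]
    [PseudoEMetricSpace γ] {s : Set α} {f : α → β} {g : α → γ} (hf : LocallyLipschitzOn s f)
    (hg : LocallyLipschitzOn s g) : LocallyLipschitzOn s fun x => (f x, g x) := by
  intro x hx
  obtain ⟨K, t, ht, hfK⟩ := hf hx
  obtain ⟨L, t', ht', hgL⟩ := hg hx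
  exact ⟨max K L, t ∩ t', inter_mem ht ht',
    (hfK.mono inter_subset_left).prodMk (hgL.mono inter_subset_right)⟩

/-! ### Integration over finite powers of a measure -/

section ProductMeasure

variable {α : Type*} [MeasurableSpace α] {μ : Measure α} [SigmaFinite μ] {n : ℕ}

lemma aemeasurable_pi_eval {β : Type*} [MeasurableSpace β] {f : α → β} (hf : AEMeasurable f μ)
    (k : Fin n) : AEMeasurable (fun u : Fin n → α => f (u k)) (Measure.pi fun _ => μ) :=
  hf.comp_quasiMeasurePreserving (Measure.quasiMeasurePreserving_eval _ k)

lemma lintegral_pi_eq_lintegral_insertNth (j : Fin (n + 1)) {f : (Fin (n + 1) → α) → ℝ≥0∞}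
    (hf : AEMeasurable f (Measure.pi fun _ => μ)) :
    ∫⁻ u, f u ∂Measure.pi (fun _ => μ) =
      ∫⁻ s, ∫⁻ v, f (j.insertNth s v) ∂Measure.pi (fun _ => μ) ∂μ := by
  have hsplit := (measurePreserving_piFinSuccAbove (fun _ : Fin (n + 1) => μ) j).symm
  rw [← hsplit.lintegral_comp_emb (MeasurableEquiv.measurableEmbedding _)]
  exact lintegral_prod _ (hf.comp_quasiMeasurePreserving hsplit.quasiMeasurePreserving)

lemma lintegral_pi_prod_eq_prod_lintegral {f : Fin n → α → ℝ≥0∞}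
    (hf : ∀ k, AEMeasurable (f k) μ) :
    ∫⁻ u, ∏ k, f k (u k) ∂Measure.pi (fun _ => μ) = ∏ k, ∫⁻ t, f k t ∂μ := by
  induction n with
  | zero => simp
  | succ n ih =>
    have htail : AEMeasurable (fun v : Fin n → α => ∏ k, f k.succ (v k))
        (Measure.pi fun _ => μ) :=
      Finset.aemeasurable_fun_prod _ fun k _ => aemeasurable_pi_eval (hf k.succ) k
    rw [lintegral_pi_eq_lintegral_insertNth 0
      (Finset.aemeasurable_fun_prod _ fun k _ => aemeasurable_pi_eval (hf k) k)]
    calc ∫⁻ s, ∫⁻ v : Fin n → α, ∏ k, f k (Fin.insertNth (α := fun _ => α) 0 s v k)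
            ∂Measure.pi (fun _ => μ) ∂μ
        = ∫⁻ s, ∫⁻ v, f 0 s * ∏ k : Fin n, f k.succ (v k) ∂Measure.pi (fun _ => μ) ∂μ := by
          simp only [Fin.prod_univ_succ, Fin.insertNth_zero, Fin.cons_zero, Fin.cons_succ, cast_eq]
      _ = ∫⁻ s, f 0 s * ∏ k : Fin n, ∫⁻ t, f k.succ t ∂μ ∂μ := by
          refine lintegral_congr fun s => ?_
          rw [lintegral_const_mul'' _ htail, ih fun k => hf k.succ]
      _ = ∏ k, ∫⁻ t, f k t ∂μ := by
          rw [lintegral_mul_const'' _ (hf 0), Fin.prod_univ_succ]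

lemma ae_pi_injective [MeasurableEq α] [NullSingletonClass μ] :
    ∀ᵐ u : Fin n → α ∂Measure.pi (fun _ => μ), Function.Injective u := by
  suffices hne : ∀ i j : Fin n, i ≠ j → ∀ᵐ u ∂Measure.pi (fun _ => μ), u i ≠ u j by
    have hall : ∀ᵐ u ∂Measure.pi (fun _ => μ), ∀ i j : Fin n, i ≠ j → u i ≠ u j := by
      simpa only [ae_all_iff] using hne
    filter_upwards [hall] with u hu i j hij
    exact not_imp_not.1 (hu i j) hij
  intro i j hij
  cases n with
  | zero => exact i.elim0
  | succ n =>
    obtain ⟨k, rfl⟩ := Fin.exists_succAbove_eq hij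
    have hmeas : MeasurableSet {p : α × (Fin n → α) | p.2 k ≠ p.1} :=
      (measurableSet_eq_fun (by fun_prop) measurable_fst).compl
    have hprod : ∀ᵐ p ∂μ.prod (Measure.pi fun _ : Fin n => μ), p.2 k ≠ p.1 :=
      (Measure.ae_prod_iff_ae_ae hmeas).2 (.of_forall fun s => Measure.ae_eval_ne (fun _ => μ) k s)
    exact (measurePreserving_piFinSuccAbove (fun _ => μ) j).quasiMeasurePreserving.ae hprod

end ProductMeasure

/-! ### Densities depending on the largest coordinate -/

/-- The function `c_δ` of the paper, for arbitrary factors `a`, `b`: the largest coordinate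
contributes `b` and every coordinate different from it contributes `a`. The values lie in any
commutative monoid, so that the same notion serves real and extended nonnegative densities. -/
noncomputable def maxDensity {M : Type*} [CommMonoid M] {n : ℕ} (a b : ℝ → M) (u : Fin n → ℝ) : M :=
  b (⨆ i, u i) * ∏ i ∈ Finset.univ.filter (fun i => u i ≠ ⨆ j, u j), a (u i)

lemma maxDensity_eq_of_forall_lt {M : Type*} [CommMonoid M] {n : ℕ} (a b : ℝ → M)
    {u : Fin (n + 1) → ℝ} {j : Fin (n + 1)} (hj : ∀ k, u (j.succAbove k) < u j) :
    maxDensity a b u = b (u j) * ∏ k, a (u (j.succAbove k)) := by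
  have hle : ∀ i, u i ≤ u j := Fin.succAboveCases j le_rfl fun k => (hj k).le
  have hsup : ⨆ i, u i = u j := le_antisymm (ciSup_le hle) (le_ciSup (finite_range u).bddAbove j)
  rw [maxDensity, hsup, Finset.prod_filter, Fin.prod_univ_succAbove _ j, if_neg (by simp), one_mul]
  exact congrArg _ (Finset.prod_congr rfl fun k _ => if_pos (hj k).ne)

section Nonneg

variable {n : ℕ} [NeZero n] {a b : ℝ → ℝ} {u : Fin n → ℝ}

lemma maxDensity_nonneg (ha : ∀ i, 0 ≤ a (u i)) (hb : ∀ i, 0 ≤ b (u i)) :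
    0 ≤ maxDensity a b u := by
  obtain ⟨j, hj⟩ := exists_eq_ciSup_of_finite (f := u)
  exact mul_nonneg (hj ▸ hb j) (Finset.prod_nonneg fun i _ => ha i)

lemma ofReal_maxDensity (ha : ∀ i, 0 ≤ a (u i)) (hb : ∀ i, 0 ≤ b (u i)) :
    ENNReal.ofReal (maxDensity a b u) =
      maxDensity (fun t => ENNReal.ofReal (a t)) (fun t => ENNReal.ofReal (b t)) u := by
  obtain ⟨j, hj⟩ := exists_eq_ciSup_of_finite (f := u)
  rw [maxDensity, ENNReal.ofReal_mul (hj ▸ hb j),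
    ENNReal.ofReal_prod_of_nonneg fun i _ => ha i, maxDensity]

end Nonneg

lemma measurable_setLIntegral_Iio {μ : Measure ℝ} (f : ℝ → ℝ≥0∞) :
    Measurable fun s => ∫⁻ t in Iio s, f t ∂μ :=
  Monotone.measurable fun _ _ hs => lintegral_mono_set (Iio_subset_Iio hs)

lemma lintegral_mul_setLIntegral_Iio_indicator_Iic {μ : Measure ℝ} [NullSingletonClass μ]
    (f : ℝ → ℝ≥0∞) {g : ℝ → ℝ≥0∞} (hg : AEMeasurable g μ) (r : ℝ) :
    ∫⁻ s, g s * ∫⁻ t in Iio s, (Iic r).indicator f t ∂μ ∂μ =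
      ∫⁻ s in Iic r, g s * ∫⁻ t in Iio s, f t ∂μ ∂μ +
        (∫⁻ t in Iio r, f t ∂μ) * ∫⁻ s in Ioi r, g s ∂μ := by
  rw [← lintegral_add_compl _ (measurableSet_Iic (a := r)), compl_Iic]
  congr 1
  · refine setLIntegral_congr_fun measurableSet_Iic fun s hs => ?_
    have hsub : Iio s ⊆ Iic r := Iio_subset_Iic_self.trans (Iic_subset_Iic.2 (mem_Iic.1 hs))
    simp only [setLIntegral_indicator measurableSet_Iic, inter_eq_right.2 hsub]
  · rw [← lintegral_const_mul'' _ hg.restrict]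
    refine setLIntegral_congr_fun measurableSet_Ioi fun s hs => ?_
    have hsub : Iic r ⊆ Iio s := Iic_subset_Iio.2 (mem_Ioi.1 hs)
    simp only [setLIntegral_indicator measurableSet_Iic, inter_eq_left.2 hsub,
      ← restrict_Iio_eq_restrict_Iic, mul_comm]

section MaxIntegral

variable {n : ℕ} {μ : Measure ℝ} [SigmaFinite μ]

lemma aemeasurable_mul_prod_indicator_Iio {f : Fin n → ℝ → ℝ≥0∞} {g : ℝ → ℝ≥0∞}
    (hf : ∀ k, AEMeasurable (f k) μ) (hg : AEMeasurable g μ) (j : Fin (n + 1)) :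
    AEMeasurable (fun u : Fin (n + 1) → ℝ =>
      g (u j) * ∏ k, (Iio (u j)).indicator (f k) (u (j.succAbove k))) (Measure.pi fun _ => μ) := by
  refine (aemeasurable_pi_eval hg j).mul (Finset.aemeasurable_fun_prod _ fun k _ => ?_)
  have hmeas : MeasurableSet {u : Fin (n + 1) → ℝ | u (j.succAbove k) < u j} :=
    measurableSet_lt (measurable_pi_apply _) (measurable_pi_apply _)
  exact (aemeasurable_pi_eval (hf k) (j.succAbove k)).indicator hmeas

lemma lintegral_pi_mul_prod_indicator_Iio {f : Fin n → ℝ → ℝ≥0∞} {g : ℝ → ℝ≥0∞}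
    (hf : ∀ k, AEMeasurable (f k) μ) (hg : AEMeasurable g μ) (j : Fin (n + 1)) :
    ∫⁻ u, g (u j) * ∏ k, (Iio (u j)).indicator (f k) (u (j.succAbove k)) ∂Measure.pi (fun _ => μ) =
      ∫⁻ s, g s * ∏ k, ∫⁻ t in Iio s, f k t ∂μ ∂μ := by
  rw [lintegral_pi_eq_lintegral_insertNth j (aemeasurable_mul_prod_indicator_Iio hf hg j)]
  refine lintegral_congr fun s => ?_
  have hind : ∀ k, AEMeasurable ((Iio s).indicator (f k)) μ := fun k =>
    (hf k).indicator measurableSet_Iio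
  simp only [Fin.insertNth_apply_same, Fin.insertNth_apply_succAbove]
  rw [lintegral_const_mul'' _ (Finset.aemeasurable_fun_prod _ fun k _ =>
    aemeasurable_pi_eval (hind k) k), lintegral_pi_prod_eq_prod_lintegral hind]
  simp only [lintegral_indicator measurableSet_Iio]

lemma sum_mul_prod_indicator_Iio_eq_maxDensity_mul_prod (a b : ℝ → ℝ≥0∞)
    (w : Fin (n + 1) → ℝ → ℝ≥0∞) {u : Fin (n + 1) → ℝ} (hu : Function.Injective u) :
    ∑ j, b (u j) * w j (u j) *
        ∏ k, (Iio (u j)).indicator (fun t => a t * w (j.succAbove k) t) (u (j.succAbove k)) =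
      maxDensity a b u * ∏ k, w k (u k) := by
  obtain ⟨j, hj⟩ := Finite.exists_max u
  have hlt : ∀ k, u (j.succAbove k) < u j := fun k =>
    (hj _).lt_of_ne (hu.ne (Fin.succAbove_ne j k))
  rw [Finset.sum_eq_single_of_mem j (Finset.mem_univ j)]
  · simp only [indicator_of_mem (mem_Iio.2 (hlt _))]
    rw [maxDensity_eq_of_forall_lt a b hlt, Fin.prod_univ_succAbove _ j, Finset.prod_mul_distrib]
    ring
  · rintro i - hij
    obtain ⟨k, rfl⟩ := Fin.exists_succAbove_eq hij.symm
    rw [Finset.prod_eq_zero (Finset.mem_univ k) (indicator_of_notMem (notMem_Iio.2 (hj i)) _),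
      mul_zero]

variable [NullSingletonClass μ] {a b : ℝ → ℝ≥0∞}

lemma aemeasurable_maxDensity (ha : AEMeasurable a μ) (hb : AEMeasurable b μ) :
    AEMeasurable (maxDensity (n := n + 1) a b) (Measure.pi fun _ => μ) := by
  refine (Finset.aemeasurable_fun_sum Finset.univ fun j _ =>
    aemeasurable_mul_prod_indicator_Iio (fun _ : Fin n => ha) hb j).congr ?_
  filter_upwards [ae_pi_injective] with u hu
  simpa using sum_mul_prod_indicator_Iio_eq_maxDensity_mul_prod a b (fun _ _ => 1) hu

lemma lintegral_maxDensity_mul_prod {w : Fin (n + 1) → ℝ → ℝ≥0∞}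
    (ha : AEMeasurable a μ) (hb : AEMeasurable b μ) (hw : ∀ k, AEMeasurable (w k) μ) :
    ∫⁻ u, maxDensity a b u * ∏ k, w k (u k) ∂Measure.pi (fun _ => μ) =
      ∑ j, ∫⁻ s, b s * w j s * ∏ k, ∫⁻ t in Iio s, a t * w (j.succAbove k) t ∂μ ∂μ := by
  have hdecomp : (fun u => maxDensity a b u * ∏ k, w k (u k)) =ᵐ[Measure.pi fun _ => μ]
      fun u => ∑ j, b (u j) * w j (u j) *
        ∏ k, (Iio (u j)).indicator (fun t => a t * w (j.succAbove k) t) (u (j.succAbove k)) := by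
    filter_upwards [ae_pi_injective] with u hu
    exact (sum_mul_prod_indicator_Iio_eq_maxDensity_mul_prod a b w hu).symm
  have hbelow (j : Fin (n + 1)) (k : Fin n) : AEMeasurable (fun t => a t * w (j.succAbove k) t) μ :=
    ha.mul (hw _)
  have hmax (j : Fin (n + 1)) : AEMeasurable (fun t => b t * w j t) μ := hb.mul (hw j)
  rw [lintegral_congr_ae hdecomp, lintegral_finsetSum' Finset.univ fun j _ =>
    aemeasurable_mul_prod_indicator_Iio (hbelow j) (hmax j) j]
  exact Finset.sum_congr rfl fun j _ =>
    lintegral_pi_mul_prod_indicator_Iio (hbelow j) (hmax j) j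

lemma lintegral_maxDensity_mul_eval {φ : ℝ → ℝ≥0∞} (ha : AEMeasurable a μ)
    (hb : AEMeasurable b μ) (hφ : AEMeasurable φ μ) (i : Fin (n + 2)) :
    ∫⁻ u, maxDensity a b u * φ (u i) ∂Measure.pi (fun _ => μ) =
      ∫⁻ s, b s * φ s * (∫⁻ t in Iio s, a t ∂μ) ^ (n + 1) ∂μ +
        (n + 1) * ∫⁻ s, b s * (∫⁻ t in Iio s, a t ∂μ) ^ n * ∫⁻ t in Iio s, a t * φ t ∂μ ∂μ := by
  set w : Fin (n + 2) → ℝ → ℝ≥0∞ := Pi.mulSingle i φ with hw_def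
  have hw : ∀ k, AEMeasurable (w k) μ := by
    intro k
    by_cases hki : k = i
    · subst hki
      simpa only [hw_def, Pi.mulSingle_eq_same] using hφ
    · simpa only [hw_def, Pi.mulSingle_eq_of_ne hki] using measurable_one.aemeasurable
  have hprod : ∀ u : Fin (n + 2) → ℝ, ∏ k, w k (u k) = φ (u i) := fun u => by
    rw [Fintype.prod_eq_single i fun k hk => by simp [hw_def, Pi.mulSingle_eq_of_ne hk],
      hw_def, Pi.mulSingle_eq_same]
  have hother : ∀ k : Fin (n + 1), ∀ s,
      b s * w (i.succAbove k) s *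
          ∏ l, ∫⁻ t in Iio s, a t * w ((i.succAbove k).succAbove l) t ∂μ =
        b s * (∫⁻ t in Iio s, a t ∂μ) ^ n * ∫⁻ t in Iio s, a t * φ t ∂μ := fun k s => by
    obtain ⟨l, hl⟩ := Fin.exists_succAbove_eq (Fin.succAbove_ne i k).symm
    have hne : ∀ l', (i.succAbove k).succAbove (l.succAbove l') ≠ i := fun l' h =>
      Fin.succAbove_ne l l' (Fin.succAbove_right_injective (h.trans hl.symm))
    rw [Fin.prod_univ_succAbove _ l, hl]
    simp [hw_def, Pi.mulSingle_eq_of_ne (hne _), mul_assoc, mul_comm]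
  simp only [← hprod]
  rw [lintegral_maxDensity_mul_prod ha hb hw, Fin.sum_univ_succAbove _ i]
  simp only [hother]
  simp [hw_def]

lemma lintegral_maxDensity_mul_indicator_Iic (ha : AEMeasurable a μ) (hb : AEMeasurable b μ)
    (i : Fin (n + 2)) (r : ℝ) :
    ∫⁻ u, maxDensity a b u * (Iic r).indicator 1 (u i) ∂Measure.pi (fun _ => μ) =
      (n + 2) * ∫⁻ s in Iic r, b s * (∫⁻ t in Iio s, a t ∂μ) ^ (n + 1) ∂μ +
        (n + 1) * ((∫⁻ t in Iio r, a t ∂μ) *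
          ∫⁻ s in Ioi r, b s * (∫⁻ t in Iio s, a t ∂μ) ^ n ∂μ) := by
  have hcut (f : ℝ → ℝ≥0∞) (t : ℝ) : f t * (Iic r).indicator 1 t = (Iic r).indicator f t := by
    simp [indicator_apply]
  have hweight : AEMeasurable (fun s => b s * (∫⁻ t in Iio s, a t ∂μ) ^ n) μ :=
    hb.mul ((measurable_setLIntegral_Iio a).pow_const n).aemeasurable
  have hmax : ∫⁻ s, b s * (Iic r).indicator 1 s * (∫⁻ t in Iio s, a t ∂μ) ^ (n + 1) ∂μ =
      ∫⁻ s in Iic r, b s * (∫⁻ t in Iio s, a t ∂μ) ^ (n + 1) ∂μ := by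
    rw [← lintegral_indicator measurableSet_Iic]
    refine lintegral_congr fun s => ?_
    rw [mul_right_comm, hcut fun s => b s * (∫⁻ t in Iio s, a t ∂μ) ^ (n + 1)]
  rw [lintegral_maxDensity_mul_eval ha hb (measurable_one.indicator measurableSet_Iic).aemeasurable,
    hmax]
  simp only [hcut a]
  rw [lintegral_mul_setLIntegral_Iio_indicator_Iic a hweight]
  simp only [mul_assoc, ← pow_succ]
  ring

end MaxIntegral

/-! ### Diagonals and their gap -/

/-- `δ` belongs to the class `D₀` of diagonals of `d`-dimensional copulas and satisfies
`Σ_δ = {0, 1}`; `δ'` is a version of its derivative with values in `[0, d]`. -/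
structure IsStrictDiagonal (d : ℕ) (δ δ' : ℝ → ℝ) : Prop where
  monotoneOn : MonotoneOn δ (Icc 0 1)
  lipschitzOnWith : LipschitzOnWith d δ (Icc 0 1)
  map_zero : δ 0 = 0
  map_one : δ 1 = 1
  lt_self : ∀ t ∈ Ioo (0 : ℝ) 1, δ t < t
  ae_hasDerivAt : ∀ᵐ t ∂volume.restrict (Icc (0 : ℝ) 1), HasDerivAt δ (δ' t) t
  deriv_mem : ∀ t ∈ Icc (0 : ℝ) 1, δ' t ∈ Icc (0 : ℝ) d

/-- The paper's `h`, the gap between the identity and the diagonal `δ`. -/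
def gap (δ : ℝ → ℝ) (r : ℝ) : ℝ := r - δ r

/-- The paper's `F`, an antiderivative of `(d - 1) / (d * h)`. -/
noncomputable def gapPotential (d : ℕ) (δ : ℝ → ℝ) (r : ℝ) : ℝ :=
  (((d : ℝ) - 1) / d) * ∫ s in (1 / 2 : ℝ)..r, 1 / gap δ s

/-- The functions `h ^ p * exp (q * F)`. This family contains the antiderivatives needed for the
marginals and is stable under products and, up to a factor, differentiation. -/
noncomputable def gapScale (d : ℕ) (δ : ℝ → ℝ) (p q r : ℝ) : ℝ :=
  gap δ r ^ p * Real.exp (q * gapPotential d δ r)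

/-- The paper's `a`, the factor of each coordinate below the maximum. -/
noncomputable def belowMaxFactor (d : ℕ) (δ δ' : ℝ → ℝ) (r : ℝ) : ℝ :=
  (((d : ℝ) - δ' r) / d) * gap δ r ^ (-1 + 1 / (d : ℝ)) * Real.exp (gapPotential d δ r)

/-- The paper's `b`, the factor of the maximal coordinate. -/
noncomputable def maxFactor (d : ℕ) (δ δ' : ℝ → ℝ) (r : ℝ) : ℝ :=
  (δ' r / d) * gap δ r ^ (-1 + 1 / (d : ℝ)) * Real.exp (-((d : ℝ) - 1) * gapPotential d δ r)

/-- Lebesgue measure on the open unit interval, which leaves out the zeros of the gap. -/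
noncomputable abbrev unitMeasure : Measure ℝ := volume.restrict (Ioo 0 1)

lemma unitMeasure_restrict_Iio {s : ℝ} (hs : s ≤ 1) :
    unitMeasure.restrict (Iio s) = volume.restrict (Ioo 0 s) := by
  rw [Measure.restrict_restrict measurableSet_Iio, inter_comm, Ioo_inter_Iio, min_eq_right hs]

lemma unitMeasure_restrict_Ioi {s : ℝ} (hs : 0 ≤ s) :
    unitMeasure.restrict (Ioi s) = volume.restrict (Ioo s 1) := by
  rw [Measure.restrict_restrict measurableSet_Ioi, inter_comm, Ioo_inter_Ioi, max_eq_right hs]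

section GapScale

variable {d : ℕ} {δ δ' : ℝ → ℝ} {r : ℝ}

lemma belowMaxFactor_eq_mul_gapScale :
    belowMaxFactor d δ δ' r = (d - δ' r) / d * gapScale d δ (-1 + 1 / d) 1 r := by
  rw [belowMaxFactor, gapScale, one_mul, mul_assoc]

lemma maxFactor_eq_mul_gapScale :
    maxFactor d δ δ' r = δ' r / d * gapScale d δ (-1 + 1 / d) (-((d : ℝ) - 1)) r := by
  rw [maxFactor, gapScale, mul_assoc]

lemma gapScale_zero_zero : gapScale d δ 0 0 r = 1 := by simp [gapScale]

lemma gapScale_one_zero : gapScale d δ 1 0 r = gap δ r := by simp [gapScale]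

lemma gapScale_nonneg (hr : 0 ≤ gap δ r) (p q : ℝ) : 0 ≤ gapScale d δ p q r :=
  mul_nonneg (Real.rpow_nonneg hr p) (Real.exp_pos _).le

lemma gapScale_mul_gapScale (hr : 0 < gap δ r) (p q p' q' : ℝ) :
    gapScale d δ p q r * gapScale d δ p' q' r = gapScale d δ (p + p') (q + q') r := by
  simp only [gapScale, Real.rpow_add hr, add_mul, Real.exp_add]
  ring

lemma gapScale_pow (hr : 0 ≤ gap δ r) (p q : ℝ) (k : ℕ) :
    gapScale d δ p q r ^ k = gapScale d δ (p * k) (q * k) r := by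
  rw [gapScale, mul_pow, ← Real.rpow_mul_natCast hr, ← Real.exp_nat_mul, gapScale]
  ring_nf

lemma maxFactor_mul_gapScale_pow (hr : 0 < gap δ r) (k : ℕ) :
    maxFactor d δ δ' r * gapScale d δ (1 / d) 1 r ^ k =
      δ' r / d * gapScale d δ (-1 + (k + 1) / d) (k - ((d : ℝ) - 1)) r := by
  rw [maxFactor_eq_mul_gapScale, gapScale_pow hr.le, mul_assoc, gapScale_mul_gapScale hr]
  ring_nf

end GapScale

namespace IsStrictDiagonal

variable {d : ℕ} {δ δ' : ℝ → ℝ} {r : ℝ}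

section Gap

lemma gap_pos (hδ : IsStrictDiagonal d δ δ') (hr : r ∈ Ioo (0 : ℝ) 1) : 0 < gap δ r :=
  sub_pos.2 (hδ.lt_self r hr)

lemma gap_zero (hδ : IsStrictDiagonal d δ δ') : gap δ 0 = 0 := by rw [gap, hδ.map_zero, sub_zero]

lemma gap_one (hδ : IsStrictDiagonal d δ δ') : gap δ 1 = 0 := by rw [gap, hδ.map_one, sub_self]

lemma gap_nonneg (hδ : IsStrictDiagonal d δ δ') (hr : r ∈ Icc (0 : ℝ) 1) : 0 ≤ gap δ r := by
  rcases eq_endpoints_or_mem_Ioo_of_mem_Icc hr with rfl | rfl | hr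
  · exact hδ.gap_zero.ge
  · exact hδ.gap_one.ge
  · exact (hδ.gap_pos hr).le

lemma map_nonneg (hδ : IsStrictDiagonal d δ δ') (hr : r ∈ Icc (0 : ℝ) 1) : 0 ≤ δ r :=
  hδ.map_zero ▸ hδ.monotoneOn ⟨le_rfl, zero_le_one⟩ hr hr.1

lemma one_le_dim (hδ : IsStrictDiagonal d δ δ') : (1 : ℝ) ≤ d := by
  have hdist := hδ.lipschitzOnWith.dist_le_mul 1 ⟨zero_le_one, le_rfl⟩ 0 ⟨le_rfl, zero_le_one⟩
  simpa [hδ.map_zero, hδ.map_one] using hdist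

lemma lipschitzOnWith_gap (hδ : IsStrictDiagonal d δ δ') :
    LipschitzOnWith (1 + d) (gap δ) (Icc 0 1) :=
  (LipschitzWith.id.lipschitzOnWith).sub hδ.lipschitzOnWith

lemma gapPotential_nonneg (hδ : IsStrictDiagonal d δ δ') (hr : r ∈ Icc (1 / 2 : ℝ) 1) :
    0 ≤ gapPotential d δ r := by
  have hd := hδ.one_le_dim
  refine mul_nonneg (div_nonneg (by linarith) (by linarith)) ?_
  refine intervalIntegral.integral_nonneg hr.1 fun s hs => one_div_nonneg.2 (hδ.gap_nonneg ?_)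
  exact ⟨by linarith [hs.1], hs.2.trans hr.2⟩

lemma gapPotential_nonpos (hδ : IsStrictDiagonal d δ δ') (hr : r ∈ Icc (0 : ℝ) (1 / 2)) :
    gapPotential d δ r ≤ 0 := by
  have hd := hδ.one_le_dim
  refine mul_nonpos_of_nonneg_of_nonpos (div_nonneg (by linarith) (by linarith)) ?_
  rw [intervalIntegral.integral_symm, neg_nonpos]
  refine intervalIntegral.integral_nonneg hr.2 fun s hs => one_div_nonneg.2 (hδ.gap_nonneg ?_)
  exact ⟨hr.1.trans hs.1, by linarith [hs.2]⟩

lemma continuousOn_one_div_gap (hδ : IsStrictDiagonal d δ δ') :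
    ContinuousOn (fun s => 1 / gap δ s) (Ioo 0 1) :=
  continuousOn_const.div (hδ.lipschitzOnWith_gap.continuousOn.mono Ioo_subset_Icc_self)
    fun _ hs => (hδ.gap_pos hs).ne'

lemma hasStrictDerivAt_gapPotential (hδ : IsStrictDiagonal d δ δ') (hr : r ∈ Ioo (0 : ℝ) 1) :
    HasStrictDerivAt (gapPotential d δ) ((d - 1) / d * (1 / gap δ r)) r := by
  have hcont := hδ.continuousOn_one_div_gap
  have hhalf : (1 / 2 : ℝ) ∈ Ioo (0 : ℝ) 1 := by norm_num
  have hint : IntervalIntegrable (fun s => 1 / gap δ s) volume (1 / 2) r :=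
    (hcont.mono (ordConnected_Ioo.uIcc_subset hhalf hr)).intervalIntegrable
  exact (intervalIntegral.integral_hasStrictDerivAt_right hint
    (hcont.stronglyMeasurableAtFilter isOpen_Ioo r hr)
    (hcont.continuousAt (isOpen_Ioo.mem_nhds hr))).const_mul _

lemma locallyLipschitzOn_gapPotential (hδ : IsStrictDiagonal d δ δ') :
    LocallyLipschitzOn (Ioo 0 1) (gapPotential d δ) :=
  fun r hr => by
    obtain ⟨K, s, hs, hK⟩ :=
      (hδ.hasStrictDerivAt_gapPotential hr).hasStrictFDerivAt.exists_lipschitzOnWith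
    exact ⟨K, s, mem_nhdsWithin_of_mem_nhds hs, hK⟩

end Gap

section GapScale

variable (p q : ℝ)

lemma locallyLipschitzOn_gapScale (hδ : IsStrictDiagonal d δ δ') :
    LocallyLipschitzOn (Ioo 0 1) (gapScale d δ p q) := by
  have hgap : LocallyLipschitzOn (Ioo 0 1) (gap δ) :=
    locallyLipschitzOn_of_lipschitzOnWith (hδ.lipschitzOnWith_gap.mono Ioo_subset_Icc_self)
  refine locallyLipschitzOn_contDiffAt_comp (φ := fun z : ℝ × ℝ => z.1 ^ p * Real.exp (q * z.2))
    (locallyLipschitzOn_prodMk hgap hδ.locallyLipschitzOn_gapPotential) fun r hr => ?_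
  exact (contDiffAt_fst.rpow_const_of_ne (hδ.gap_pos hr).ne').mul (by fun_prop)

lemma continuousOn_gapScale (hδ : IsStrictDiagonal d δ δ') :
    ContinuousOn (gapScale d δ p q) (Ioo 0 1) :=
  (hδ.locallyLipschitzOn_gapScale p q).continuousOn

lemma hasDerivAt_gapScale (hδ : IsStrictDiagonal d δ δ') (hr : r ∈ Ioo (0 : ℝ) 1)
    (hderiv : HasDerivAt δ (δ' r) r) :
    HasDerivAt (gapScale d δ p q)
      ((p * (1 - δ' r) + q * ((d - 1) / d)) * gapScale d δ (p - 1) q r) r := by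
  have hgap : HasDerivAt (gap δ) (1 - δ' r) r := (hasDerivAt_id r).sub hderiv
  have hpos := hδ.gap_pos hr
  have hexp := ((hδ.hasStrictDerivAt_gapPotential hr).hasDerivAt.const_mul q).exp
  refine ((hgap.rpow_const (p := p) (.inl hpos.ne')).mul hexp).congr_deriv ?_
  rw [gapScale, Real.rpow_sub_one hpos.ne']
  field_simp

lemma tendsto_gap_rpow (hδ : IsStrictDiagonal d δ δ') {s : ℝ} (hs : s ∈ Icc (0 : ℝ) 1)
    (hgap : gap δ s = 0) {p : ℝ} (hp : 0 < p) :
    Tendsto (fun t => gap δ t ^ p) (𝓝[Icc 0 1] s) (𝓝 0) := by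
  have hcont :=
    (hδ.lipschitzOnWith_gap.continuousOn s hs).tendsto.rpow_const (p := p) (.inr hp.le)
  rwa [hgap, Real.zero_rpow hp.ne'] at hcont

/- Where `q * F ≤ 0` the exponential is at most `1`, so the vanishing of `h` decides the limit. -/
lemma tendsto_gapScale_zero (hδ : IsStrictDiagonal d δ δ') {p q : ℝ} {l : Filter ℝ}
    (hl : ∀ᶠ t in l, t ∈ Icc (0 : ℝ) 1)
    (hpow : Tendsto (fun t => gap δ t ^ p) l (𝓝 0))
    (hexp : ∀ᶠ t in l, q * gapPotential d δ t ≤ 0) : Tendsto (gapScale d δ p q) l (𝓝 0) := by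
  refine squeeze_zero' ?_ ?_ hpow
  · filter_upwards [hl] with t ht using gapScale_nonneg (hδ.gap_nonneg ht) p q
  · filter_upwards [hl, hexp] with t ht hF
    exact mul_le_of_le_one_right (Real.rpow_nonneg (hδ.gap_nonneg ht) p) (Real.exp_le_one_iff.2 hF)

lemma tendsto_gapScale_right_zero (hδ : IsStrictDiagonal d δ δ') {p q : ℝ}
    (hp : 0 < p) (hq : 0 ≤ q) :
    Tendsto (gapScale d δ p q) (𝓝[>] 0) (𝓝 0) := by
  have hnear : Icc (0 : ℝ) (1 / 2) ∈ 𝓝[>] (0 : ℝ) := Icc_mem_nhdsGT (by norm_num)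
  refine hδ.tendsto_gapScale_zero (Icc_mem_nhdsGT zero_lt_one)
    ((hδ.tendsto_gap_rpow ⟨le_rfl, zero_le_one⟩ hδ.gap_zero hp).mono_left
      (le_inf nhdsWithin_le_nhds (le_principal_iff.2 (Icc_mem_nhdsGT zero_lt_one)))) ?_
  filter_upwards [hnear] with t ht
  exact mul_nonpos_of_nonneg_of_nonpos hq (hδ.gapPotential_nonpos ht)

lemma tendsto_gapScale_left_one (hδ : IsStrictDiagonal d δ δ') {p q : ℝ}
    (hp : 0 < p) (hq : q ≤ 0) :
    Tendsto (gapScale d δ p q) (𝓝[<] 1) (𝓝 0) := by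
  have hnear : Icc (1 / 2 : ℝ) 1 ∈ 𝓝[<] (1 : ℝ) := Icc_mem_nhdsLT (by norm_num)
  refine hδ.tendsto_gapScale_zero (Icc_mem_nhdsLT zero_lt_one)
    ((hδ.tendsto_gap_rpow ⟨zero_le_one, le_rfl⟩ hδ.gap_one hp).mono_left
      (le_inf nhdsWithin_le_nhds (le_principal_iff.2 (Icc_mem_nhdsLT zero_lt_one)))) ?_
  filter_upwards [hnear] with t ht
  exact mul_nonpos_of_nonpos_of_nonneg hq (hδ.gapPotential_nonneg ht)

end GapScale

section Factors

lemma belowMaxFactor_nonneg (hδ : IsStrictDiagonal d δ δ') (hr : r ∈ Icc (0 : ℝ) 1) :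
    0 ≤ belowMaxFactor d δ δ' r := by
  rw [belowMaxFactor_eq_mul_gapScale]
  exact mul_nonneg (div_nonneg (sub_nonneg.2 (hδ.deriv_mem r hr).2) d.cast_nonneg)
    (gapScale_nonneg (hδ.gap_nonneg hr) _ _)

lemma maxFactor_nonneg (hδ : IsStrictDiagonal d δ δ') (hr : r ∈ Icc (0 : ℝ) 1) :
    0 ≤ maxFactor d δ δ' r := by
  rw [maxFactor_eq_mul_gapScale]
  exact mul_nonneg (div_nonneg (hδ.deriv_mem r hr).1 d.cast_nonneg)
    (gapScale_nonneg (hδ.gap_nonneg hr) _ _)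

lemma aemeasurable_deriv (hδ : IsStrictDiagonal d δ δ') : AEMeasurable δ' unitMeasure :=
  ⟨deriv δ, measurable_deriv δ, (ae_restrict_of_ae_restrict_of_subset Ioo_subset_Icc_self
    hδ.ae_hasDerivAt).mono fun _ ht => ht.deriv.symm⟩

lemma aemeasurable_gapScale (hδ : IsStrictDiagonal d δ δ') (p q : ℝ) :
    AEMeasurable (gapScale d δ p q) unitMeasure :=
  (hδ.continuousOn_gapScale p q).aemeasurable measurableSet_Ioo

lemma aemeasurable_ofReal_belowMaxFactor (hδ : IsStrictDiagonal d δ δ') :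
    AEMeasurable (fun t => ENNReal.ofReal (belowMaxFactor d δ δ' t)) unitMeasure := by
  simp only [belowMaxFactor_eq_mul_gapScale]
  exact (((hδ.aemeasurable_deriv.const_sub _).div_const _).mul
    (hδ.aemeasurable_gapScale _ _)).ennreal_ofReal

lemma aemeasurable_ofReal_maxFactor (hδ : IsStrictDiagonal d δ δ') :
    AEMeasurable (fun t => ENNReal.ofReal (maxFactor d δ δ' t)) unitMeasure := by
  simp only [maxFactor_eq_mul_gapScale]
  exact ((hδ.aemeasurable_deriv.div_const _).mul (hδ.aemeasurable_gapScale _ _)).ennreal_ofReal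

end Factors

section Integrals

lemma ae_mem_and_hasDerivAt (hδ : IsStrictDiagonal d δ δ') {p q : ℝ} (hp : 0 ≤ p) (hq : q ≤ 1) :
    ∀ᵐ t ∂volume.restrict (Ioo p q), t ∈ Ioo (0 : ℝ) 1 ∧ HasDerivAt δ (δ' t) t := by
  have hsub : Ioo p q ⊆ Ioo 0 1 := Ioo_subset_Ioo hp hq
  filter_upwards [ae_restrict_mem measurableSet_Ioo, ae_restrict_of_ae_restrict_of_subset
    (hsub.trans Ioo_subset_Icc_self) hδ.ae_hasDerivAt] with t ht hderiv
  exact ⟨hsub ht, hderiv⟩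

lemma setLIntegral_belowMaxFactor (hδ : IsStrictDiagonal d δ δ') {s : ℝ} (hs : s ∈ Ioo (0 : ℝ) 1) :
    ∫⁻ t in Iio s, ENNReal.ofReal (belowMaxFactor d δ δ' t) ∂unitMeasure =
      ENNReal.ofReal (gapScale d δ (1 / d) 1 s) := by
  have hd : (0 : ℝ) < d := zero_lt_one.trans_le hδ.one_le_dim
  have hae := hδ.ae_mem_and_hasDerivAt le_rfl hs.2.le
  have hderiv : ∀ᵐ t ∂volume.restrict (Ioo 0 s),
      HasDerivAt (gapScale d δ (1 / d) 1) (belowMaxFactor d δ δ' t) t := by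
    filter_upwards [hae] with t ht
    refine (hδ.hasDerivAt_gapScale (1 / d) 1 ht.1 ht.2).congr_deriv ?_
    have hcoeff : 1 / (d : ℝ) * (1 - δ' t) + 1 * ((d - 1) / d) = (d - δ' t) / d := by ring
    rw [belowMaxFactor_eq_mul_gapScale, hcoeff, sub_eq_neg_add (1 / (d : ℝ)) 1]
  have hcont : Tendsto (gapScale d δ (1 / d) 1) (𝓝[<] s) (𝓝 (gapScale d δ (1 / d) 1 s)) :=
    ((hδ.continuousOn_gapScale _ _).continuousAt (isOpen_Ioo.mem_nhds hs)).mono_left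
      nhdsWithin_le_nhds
  rw [unitMeasure_restrict_Iio hs.2.le, lintegral_Ioo_ofReal_eq_sub_of_locallyLipschitzOn hs.1
    ((hδ.locallyLipschitzOn_gapScale _ _).mono (Ioo_subset_Ioo_right hs.2.le)) hderiv
    (hae.mono fun t ht => hδ.belowMaxFactor_nonneg (Ioo_subset_Icc_self ht.1))
    (hδ.tendsto_gapScale_right_zero (one_div_pos.2 hd) zero_le_one) hcont, sub_zero]

lemma maxFactor_mul_setLIntegral_pow (hδ : IsStrictDiagonal d δ δ') {s : ℝ}
    (hs : s ∈ Ioo (0 : ℝ) 1) (k : ℕ) :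
    ENNReal.ofReal (maxFactor d δ δ' s) *
        (∫⁻ t in Iio s, ENNReal.ofReal (belowMaxFactor d δ δ' t) ∂unitMeasure) ^ k =
      ENNReal.ofReal (δ' s / d * gapScale d δ (-1 + (k + 1) / d) (k - ((d : ℝ) - 1)) s) := by
  have hs' := Ioo_subset_Icc_self hs
  rw [hδ.setLIntegral_belowMaxFactor hs,
    ← ENNReal.ofReal_pow (gapScale_nonneg (hδ.gap_nonneg hs') _ _),
    ← ENNReal.ofReal_mul (hδ.maxFactor_nonneg hs'), maxFactor_mul_gapScale_pow (hδ.gap_pos hs)]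

lemma setLIntegral_Ioo_deriv_div (hδ : IsStrictDiagonal d δ δ') (hr : r ∈ Icc (0 : ℝ) 1) :
    ∫⁻ t in Ioo 0 r, ENNReal.ofReal (δ' t / d) = ENNReal.ofReal (δ r / d) := by
  rcases hr.1.eq_or_lt with rfl | hr0
  · simp [hδ.map_zero]
  have hae := hδ.ae_mem_and_hasDerivAt le_rfl hr.2
  have hcont (x : ℝ) (hx : x ∈ Icc (0 : ℝ) 1) {l : Filter ℝ} (hl : l ≤ 𝓝[Icc 0 1] x) :
      Tendsto (fun t => δ t / d) l (𝓝 (δ x / d)) :=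
    ((hδ.lipschitzOnWith.continuousOn x hx).tendsto.mono_left hl).div_const _
  have hlip : LocallyLipschitzOn (Ioo 0 r) fun t => δ t / d :=
    locallyLipschitzOn_contDiffAt_comp (φ := fun x => x / (d : ℝ))
      (locallyLipschitzOn_of_lipschitzOnWith (hδ.lipschitzOnWith.mono
        (Ioo_subset_Icc_self.trans (Icc_subset_Icc_right hr.2)))) fun _ _ => by fun_prop
  rw [lintegral_Ioo_ofReal_eq_sub_of_locallyLipschitzOn hr0 hlip
    (hae.mono fun t ht => ht.2.div_const _)
    (hae.mono fun t ht => div_nonneg (hδ.deriv_mem t (Ioo_subset_Icc_self ht.1)).1 d.cast_nonneg)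
    (hcont 0 ⟨le_rfl, zero_le_one⟩ ?_) (hcont r hr ?_), hδ.map_zero, zero_div, sub_zero]
  · exact le_inf nhdsWithin_le_nhds (le_principal_iff.2 (Icc_mem_nhdsGT zero_lt_one))
  · exact le_inf nhdsWithin_le_nhds (le_principal_iff.2
      (mem_of_superset (Icc_mem_nhdsLT hr0) (Icc_subset_Icc_right hr.2)))

lemma setLIntegral_Ioo_deriv_div_mul_gapScale (hδ : IsStrictDiagonal d δ δ') (hd : 1 < d)
    (hr : r ∈ Ioo (0 : ℝ) 1) :
    ∫⁻ t in Ioo r 1, ENNReal.ofReal (δ' t / d * gapScale d δ (-(1 / d)) (-1) t) =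
      ENNReal.ofReal (gapScale d δ (1 - 1 / d) (-1) r / (d - 1)) := by
  have hd' : (1 : ℝ) < d := by exact_mod_cast hd
  have hp : 0 < 1 - 1 / (d : ℝ) := sub_pos.2 ((div_lt_one (zero_lt_one.trans hd')).2 hd')
  have hae := hδ.ae_mem_and_hasDerivAt hr.1.le le_rfl
  have hlip : LocallyLipschitzOn (Ioo r 1) fun t => -gapScale d δ (1 - 1 / d) (-1) t / (d - 1) :=
    locallyLipschitzOn_contDiffAt_comp (φ := fun x => -x / ((d : ℝ) - 1))
      ((hδ.locallyLipschitzOn_gapScale _ _).mono (Ioo_subset_Ioo_left hr.1.le))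
      fun _ _ => by fun_prop
  have hderiv : ∀ᵐ t ∂volume.restrict (Ioo r 1),
      HasDerivAt (fun t => -gapScale d δ (1 - 1 / d) (-1) t / (d - 1))
        (δ' t / d * gapScale d δ (-(1 / d)) (-1) t) t := by
    filter_upwards [hae] with t ht
    refine ((hδ.hasDerivAt_gapScale (1 - 1 / d) (-1) ht.1 ht.2).neg.div_const _).congr_deriv ?_
    rw [sub_sub_cancel_left]
    field_simp [(sub_pos.2 hd').ne']
    ring
  have hcont : Tendsto (gapScale d δ (1 - 1 / d) (-1)) (𝓝[>] r)
      (𝓝 (gapScale d δ (1 - 1 / d) (-1) r)) :=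
    ((hδ.continuousOn_gapScale _ _).continuousAt (isOpen_Ioo.mem_nhds hr)).mono_left
      nhdsWithin_le_nhds
  rw [lintegral_Ioo_ofReal_eq_sub_of_locallyLipschitzOn hr.2 hlip hderiv
    (hae.mono fun t ht => ?_) (hcont.neg.div_const _)
    ((hδ.tendsto_gapScale_left_one hp (by norm_num)).neg.div_const _)]
  · rw [neg_zero, zero_div, zero_sub, neg_div, neg_neg]
  · exact mul_nonneg (div_nonneg (hδ.deriv_mem t (Ioo_subset_Icc_self ht.1)).1 d.cast_nonneg)
      (gapScale_nonneg (hδ.gap_pos ht.1).le _ _)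

variable {m : ℕ}

lemma setLIntegral_Iic_maxFactor_mul (hδ : IsStrictDiagonal (m + 2) δ δ')
    (hr : r ∈ Icc (0 : ℝ) 1) :
    ∫⁻ s in Iic r, ENNReal.ofReal (maxFactor (m + 2) δ δ' s) *
        (∫⁻ t in Iio s, ENNReal.ofReal (belowMaxFactor (m + 2) δ δ' t) ∂unitMeasure) ^ (m + 1)
          ∂unitMeasure = ENNReal.ofReal (δ r / (m + 2 : ℕ)) := by
  have hp : -1 + ((m + 1 : ℕ) + 1) / ((m + 2 : ℕ) : ℝ) = 0 := by
    push_cast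
    field_simp
    ring
  have hq : ((m + 1 : ℕ) : ℝ) - ((m + 2 : ℕ) - 1) = 0 := by
    push_cast
    ring
  rw [← restrict_Iio_eq_restrict_Iic, unitMeasure_restrict_Iio hr.2,
    ← hδ.setLIntegral_Ioo_deriv_div hr]
  refine setLIntegral_congr_fun measurableSet_Ioo fun s hs => ?_
  simp only [hδ.maxFactor_mul_setLIntegral_pow (Ioo_subset_Ioo_right hr.2 hs), hp, hq,
    gapScale_zero_zero, mul_one]

lemma setLIntegral_Ioi_maxFactor_mul (hδ : IsStrictDiagonal (m + 2) δ δ')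
    (hr : r ∈ Ioo (0 : ℝ) 1) :
    ∫⁻ s in Ioi r, ENNReal.ofReal (maxFactor (m + 2) δ δ' s) *
        (∫⁻ t in Iio s, ENNReal.ofReal (belowMaxFactor (m + 2) δ δ' t) ∂unitMeasure) ^ m
          ∂unitMeasure =
      ENNReal.ofReal (gapScale (m + 2) δ (1 - 1 / (m + 2 : ℕ)) (-1) r / ((m + 2 : ℕ) - 1)) := by
  have hp : -1 + ((m : ℝ) + 1) / (m + 2 : ℕ) = -(1 / (m + 2 : ℕ)) := by
    push_cast
    field_simp
    ring
  have hq : (m : ℝ) - ((m + 2 : ℕ) - 1) = -1 := by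
    push_cast
    ring
  rw [unitMeasure_restrict_Ioi hr.1.le,
    ← hδ.setLIntegral_Ioo_deriv_div_mul_gapScale (by lia) hr]
  refine setLIntegral_congr_fun measurableSet_Ioo fun s hs => ?_
  simp only [hδ.maxFactor_mul_setLIntegral_pow (Ioo_subset_Ioo_left hr.1.le hs), hp, hq]

lemma setLIntegral_mul_setLIntegral_Ioi_maxFactor_mul (hδ : IsStrictDiagonal (m + 2) δ δ')
    (hr : r ∈ Icc (0 : ℝ) 1) :
    (∫⁻ t in Iio r, ENNReal.ofReal (belowMaxFactor (m + 2) δ δ' t) ∂unitMeasure) *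
        ∫⁻ s in Ioi r, ENNReal.ofReal (maxFactor (m + 2) δ δ' s) *
          (∫⁻ t in Iio s, ENNReal.ofReal (belowMaxFactor (m + 2) δ δ' t) ∂unitMeasure) ^ m
            ∂unitMeasure = ENNReal.ofReal (gap δ r / ((m + 2 : ℕ) - 1)) := by
  rcases eq_endpoints_or_mem_Ioo_of_mem_Icc hr with rfl | rfl | hr
  · simp [unitMeasure_restrict_Iio zero_le_one, hδ.gap_zero]
  · simp [unitMeasure_restrict_Ioi zero_le_one, hδ.gap_one]
  have hmul : gapScale (m + 2) δ (1 / (m + 2 : ℕ)) 1 r *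
      gapScale (m + 2) δ (1 - 1 / (m + 2 : ℕ)) (-1) r = gap δ r := by
    rw [gapScale_mul_gapScale (hδ.gap_pos hr), add_sub_cancel, add_neg_cancel, gapScale_one_zero]
  rw [hδ.setLIntegral_belowMaxFactor hr, hδ.setLIntegral_Ioi_maxFactor_mul hr,
    ← ENNReal.ofReal_mul (gapScale_nonneg (hδ.gap_pos hr).le _ _), mul_div_assoc', hmul]

end Integrals

end IsStrictDiagonal

/-! ### The marginals -/

lemma volume_restrict_cube_eq_pi_unitMeasure (n : ℕ) :
    volume.restrict (univ.pi fun _ : Fin n => Icc (0 : ℝ) 1) = Measure.pi fun _ => unitMeasure := by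
  rw [volume_pi, Measure.restrict_pi_pi]
  exact congrArg Measure.pi (funext fun _ => restrict_Ioo_eq_restrict_Icc.symm)

namespace IsStrictDiagonal

variable {m : ℕ} {δ δ' : ℝ → ℝ} {r : ℝ}

lemma lintegral_maxDensity_mul_indicator_Iic (hδ : IsStrictDiagonal (m + 2) δ δ') (i : Fin (m + 2))
    (hr : r ∈ Icc (0 : ℝ) 1) :
    ∫⁻ u, maxDensity (fun t => ENNReal.ofReal (belowMaxFactor (m + 2) δ δ' t))
        (fun t => ENNReal.ofReal (maxFactor (m + 2) δ δ' t)) u * (Iic r).indicator 1 (u i)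
        ∂Measure.pi (fun _ => unitMeasure) = ENNReal.ofReal r := by
  have hδr : 0 ≤ δ r := hδ.map_nonneg hr
  have hgap : 0 ≤ gap δ r := hδ.gap_nonneg hr
  have hd : (0 : ℝ) ≤ ((m + 2 : ℕ) - 1) := by
    push_cast
    linarith [m.cast_nonneg (α := ℝ)]
  calc
    _ = ((m : ℝ≥0∞) + 2) * ENNReal.ofReal (δ r / (m + 2 : ℕ)) +
          (m + 1) * ENNReal.ofReal (gap δ r / ((m + 2 : ℕ) - 1)) := by
      rw [_root_.lintegral_maxDensity_mul_indicator_Iic hδ.aemeasurable_ofReal_belowMaxFactor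
        hδ.aemeasurable_ofReal_maxFactor, hδ.setLIntegral_Iic_maxFactor_mul hr,
        hδ.setLIntegral_mul_setLIntegral_Ioi_maxFactor_mul hr]
    _ = ENNReal.ofReal (((m : ℝ) + 2) * (δ r / (m + 2 : ℕ)) +
          (m + 1) * (gap δ r / ((m + 2 : ℕ) - 1))) := by
      rw [ENNReal.ofReal_add (by positivity) (by positivity), ENNReal.ofReal_mul (by positivity),
        ENNReal.ofReal_mul (by positivity), ENNReal.ofReal_add (by positivity) (by positivity),
        ENNReal.ofReal_add (by positivity) (by positivity), ENNReal.ofReal_natCast,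
        ENNReal.ofReal_ofNat, ENNReal.ofReal_one]
    _ = ENNReal.ofReal r := by
      have hpred : ((m + 2 : ℕ) : ℝ) - 1 = m + 1 := by
        push_cast
        ring
      rw [hpred, gap]
      congr 1
      push_cast
      field_simp
      ring

lemma maxDensity_nonneg (hδ : IsStrictDiagonal (m + 2) δ δ') {u : Fin (m + 2) → ℝ}
    (hu : u ∈ univ.pi fun _ => Icc (0 : ℝ) 1) :
    0 ≤ maxDensity (belowMaxFactor (m + 2) δ δ') (maxFactor (m + 2) δ δ') u :=
  _root_.maxDensity_nonneg (fun i => hδ.belowMaxFactor_nonneg (hu i trivial))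
    fun i => hδ.maxFactor_nonneg (hu i trivial)

lemma integral_maxDensity_mul_ite (hδ : IsStrictDiagonal (m + 2) δ δ') (i : Fin (m + 2))
    (hr : r ∈ Icc (0 : ℝ) 1) :
    ∫ u in univ.pi fun _ => Icc (0 : ℝ) 1,
      maxDensity (belowMaxFactor (m + 2) δ δ') (maxFactor (m + 2) δ δ') u *
        (if u i ≤ r then 1 else 0) = r := by
  set c : (Fin (m + 2) → ℝ) → ℝ≥0∞ := fun u =>
    maxDensity (fun t => ENNReal.ofReal (belowMaxFactor (m + 2) δ δ' t))
      (fun t => ENNReal.ofReal (maxFactor (m + 2) δ δ' t)) u * (Iic r).indicator 1 (u i) with hc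
  have hlint : ∫⁻ u, c u ∂Measure.pi (fun _ => unitMeasure) = ENNReal.ofReal r :=
    hδ.lintegral_maxDensity_mul_indicator_Iic i hr
  have hmeas : AEMeasurable c (Measure.pi fun _ => unitMeasure) :=
    (aemeasurable_maxDensity hδ.aemeasurable_ofReal_belowMaxFactor
      hδ.aemeasurable_ofReal_maxFactor).mul
      (aemeasurable_pi_eval (measurable_one.indicator measurableSet_Iic).aemeasurable i)
  have htoReal : ∀ u ∈ univ.pi fun _ => Icc (0 : ℝ) 1,
      maxDensity (belowMaxFactor (m + 2) δ δ') (maxFactor (m + 2) δ δ') u *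
        (if u i ≤ r then 1 else 0) = (c u).toReal := fun u hu => by
    simp only [hc]
    rw [← ofReal_maxDensity (fun i => hδ.belowMaxFactor_nonneg (hu i trivial))
      fun i => hδ.maxFactor_nonneg (hu i trivial), ENNReal.toReal_mul,
      ENNReal.toReal_ofReal (hδ.maxDensity_nonneg hu)]
    split_ifs with hi <;> simp [hi]
  rw [setIntegral_congr_fun (MeasurableSet.univ_pi fun _ => measurableSet_Icc) htoReal,
    volume_restrict_cube_eq_pi_unitMeasure,
    integral_toReal hmeas (ae_lt_top' hmeas (hlint ▸ ENNReal.ofReal_ne_top)), hlint,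
    ENNReal.toReal_ofReal hr.1]

end IsStrictDiagonal

/-- c_δ(x) = b(max x)·∏_{x_i ≠ max x} a(x_i) is a copula density:
it is non-negative on the cube and has uniform one-dimensional marginals. -/
theorem c_delta_is_copula_density
    (d : ℕ) (hd : 2 ≤ d) (δ δ' : ℝ → ℝ)
    (hmono : MonotoneOn δ (Set.Icc 0 1))
    (hlip : ∀ s ∈ Set.Icc (0:ℝ) 1, ∀ t ∈ Set.Icc (0:ℝ) 1,
      |δ s - δ t| ≤ (d : ℝ) * |s - t|)
    (h0 : δ 0 = 0) (h1 : δ 1 = 1)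
    (hlt : ∀ t ∈ Set.Ioo (0:ℝ) 1, δ t < t)
    (hderiv : ∀ᵐ t ∂(volume.restrict (Set.Icc (0:ℝ) 1)), HasDerivAt δ (δ' t) t)
    (hd' : ∀ t ∈ Set.Icc (0:ℝ) 1, δ' t ∈ Set.Icc (0:ℝ) (d:ℝ))
    (h F a b : ℝ → ℝ)
    (hh : ∀ r, h r = r - δ r)
    (hF : ∀ r, F r = (((d:ℝ) - 1) / d) * ∫ s in (1/2 : ℝ)..r, 1 / h s)
    (ha : ∀ r, a r = (((d:ℝ) - δ' r) / d) * h r ^ (-1 + 1/(d:ℝ)) * Real.exp (F r))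
    (hb : ∀ r, b r = (δ' r / d) * h r ^ (-1 + 1/(d:ℝ)) *
      Real.exp (-((d:ℝ) - 1) * F r))
    (c : (Fin d → ℝ) → ℝ)
    (hc : ∀ x, c x = b (⨆ i, x i) *
      ∏ i ∈ Finset.univ.filter (fun i => x i ≠ ⨆ j, x j), a (x i)) :
    (∀ x ∈ Set.univ.pi (fun _ : Fin d => Set.Icc (0:ℝ) 1), 0 ≤ c x) ∧
    (∀ i : Fin d, ∀ r ∈ Set.Icc (0:ℝ) 1,
      (∫ u in Set.univ.pi (fun _ : Fin d => Set.Icc (0:ℝ) 1),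
        c u * (if u i ≤ r then 1 else 0)) = r) := by
  obtain ⟨m, rfl⟩ : ∃ m, d = m + 2 := Nat.exists_eq_add_of_le' hd
  have hδ : IsStrictDiagonal (m + 2) δ δ' :=
    { monotoneOn := hmono
      lipschitzOnWith := .of_dist_le_mul fun s hs t ht => by
        simpa only [NNReal.coe_natCast, Real.dist_eq] using hlip s hs t ht
      map_zero := h0
      map_one := h1
      lt_self := hlt
      ae_hasDerivAt := hderiv
      deriv_mem := hd' }
  obtain rfl : h = gap δ := funext hh
  obtain rfl : F = gapPotential (m + 2) δ := funext hF
  obtain rfl : a = belowMaxFactor (m + 2) δ δ' := funext ha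
  obtain rfl : b = maxFactor (m + 2) δ δ' := funext hb
  obtain rfl : c = maxDensity (belowMaxFactor (m + 2) δ δ') (maxFactor (m + 2) δ δ') := funext hc
  exact ⟨fun u hu => hδ.maxDensity_nonneg hu, fun i r hr => hδ.integral_maxDensity_mul_ite i hr⟩
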